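/- Let N ≥ 1 and let ν be a Dirichlet character modulo N with values in ℂ. Define g(y) = ∑_{n=1}^∞ ν(n)·exp(−πn²y/N) and ḡ(y) = ∑_{n=1}^∞ conj(ν(n))·exp(−πn²y/N) for y > 0, and set H(y) = ∫_0^∞ g(y·y')·ḡ(y/y') dy'/y'. Then for every s ∈ ℂ with Re(s) > 1, ∫_0^∞ y^{s−1}·H(y) dy = (1/2)·Γ(s/2)²·(π/N)^{−s} · (∑_{n=1}^∞ ν(n)·n^{−s}) · (∑_{n=1}^∞ conj(ν(n))·n^{−s}). -/

import Mathlib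

open MeasureTheory

lemma aux_mellin (f : ℝ → ℂ) (s : ℂ) {v : ℝ} (hv : 0 < v) :
    mellin (fun y => f (y ^ 2 / v)) s = (v : ℂ) ^ (s / 2) * (1 / 2 * mellin f (s / 2)) := by
  have h1 := mellin_comp_rpow (fun t => f (v⁻¹ * t)) s 2
  have h2 := mellin_comp_mul_left f (s / 2) (inv_pos.mpr hv)
  have e : (fun t : ℝ => f (v⁻¹ * t ^ (2 : ℝ))) = fun y => f (y ^ 2 / v) := by
    funext t
    rw [Real.rpow_two, div_eq_inv_mul]
  simp only [e] at h1
  rw [h1]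
  have : (((2 : ℝ) : ℂ)) = 2 := by norm_num
  rw [this, h2, Complex.ofReal_inv, Complex.inv_cpow _ _ (by
    rw [Complex.arg_ofReal_of_nonneg hv.le]; exact Real.pi_pos.ne), Complex.cpow_neg, inv_inv]
  simp
  ring

lemma aux_conv (f : ℝ → ℂ) (s : ℂ) {v : ℝ} (hv : 0 < v) (hf : MellinConvergent f (s / 2)) :
    MellinConvergent (fun y => f (y ^ 2 / v)) s := by
  have h1 := MellinConvergent.comp_rpow (f := fun t => f (v⁻¹ * t)) (s := s) (a := 2) (by norm_num)
  have e : (fun t : ℝ => f (v⁻¹ * t ^ (2 : ℝ))) = fun y => f (y ^ 2 / v) := by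
    funext t
    rw [Real.rpow_two, div_eq_inv_mul]
  simp only [e] at h1
  rw [h1]
  have : (((2 : ℝ) : ℂ)) = 2 := by norm_num
  rw [this, MellinConvergent.comp_mul_left (inv_pos.mpr hv)]
  exact hf

lemma aux_inner (f g : ℝ → ℂ) {y : ℝ} (hy : 0 < y) :
    ∫ t in Set.Ioi (0 : ℝ), f (y * t) * g (y / t) / (t : ℂ)
      = ∫ v in Set.Ioi (0 : ℝ), f (y ^ 2 / v) * g v / (v : ℂ) := by
  have h1 := mellin_comp_inv (fun t => f (y ^ 2 / (y * t)) * g (y * t)) 0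
  have h2 := mellin_comp_mul_left (fun t => f (y ^ 2 / t) * g t) 0 hy
  rw [neg_zero] at h1
  rw [h2] at h1
  simp only [neg_zero, Complex.cpow_zero, mellin, zero_sub, Complex.cpow_neg_one,
    smul_eq_mul] at h1
  have e1 : ∀ t : ℝ, (t : ℂ)⁻¹ * (f (y ^ 2 / (y * t⁻¹)) * g (y * t⁻¹))
      = f (y * t) * g (y / t) / (t : ℂ) := by
    intro t
    have : y ^ 2 / (y * t⁻¹) = y * t := by
      by_cases ht : t = 0
      · simp [ht]
      · field_simp
    rw [this, ← div_eq_mul_inv y t]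
    ring
  have e2 : ∀ t : ℝ, (t : ℂ)⁻¹ * (f (y ^ 2 / t) * g t) = f (y ^ 2 / t) * g t / (t : ℂ) := by
    intro t
    ring
  simpa only [e1, e2, one_mul] using h1

lemma aux_cpow {v : ℝ} (hv : 0 < v) (s : ℂ) : (v : ℂ) ^ (s - 1) = (v : ℂ) ^ s / v := by
  rw [Complex.cpow_sub _ _ (Complex.ofReal_ne_zero.mpr hv.ne'), Complex.cpow_one]

lemma aux_main (f g : ℝ → ℂ) (s : ℂ) (hfc : ContinuousOn f (Set.Ioi 0))
    (hgc : ContinuousOn g (Set.Ioi 0))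
    (hf : MellinConvergent f (s / 2)) (hg : MellinConvergent g (s / 2)) :
    ∫ y in Set.Ioi (0 : ℝ), (y : ℂ) ^ (s - 1) *
        ∫ t in Set.Ioi (0 : ℝ), f (y * t) * g (y / t) / (t : ℂ)
      = 1 / 2 * mellin f (s / 2) * mellin g (s / 2) := by
  have step : ∀ v ∈ Set.Ioi (0 : ℝ),
      ∫ y in Set.Ioi (0 : ℝ), (y : ℂ) ^ (s - 1) * (f (y ^ 2 / v) * g v / (v : ℂ))
        = (1 / 2 * mellin f (s / 2)) * ((v : ℂ) ^ (s / 2 - 1) • g v) := by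
    intro v hv
    have h := aux_mellin f s hv
    simp only [mellin, smul_eq_mul] at h ⊢
    have : ∀ y : ℝ, (y : ℂ) ^ (s - 1) * (f (y ^ 2 / v) * g v / (v : ℂ))
        = ((y : ℂ) ^ (s - 1) * f (y ^ 2 / v)) * (g v / v) := fun y => by ring
    simp only [this]
    rw [integral_mul_const, h, aux_cpow hv]
    ring
  have hint : Integrable (Function.uncurry fun y v : ℝ =>
      (y : ℂ) ^ (s - 1) * (f (y ^ 2 / v) * g v / (v : ℂ)))
      ((volume.restrict (Set.Ioi 0)).prod (volume.restrict (Set.Ioi 0))) := by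
    rw [integrable_prod_iff']
    · constructor
      · filter_upwards [ae_restrict_mem measurableSet_Ioi] with v hv
        have h := aux_conv f s hv hf
        have : ∀ y : ℝ, (y : ℂ) ^ (s - 1) * (f (y ^ 2 / v) * g v / (v : ℂ))
          = ((y : ℂ) ^ (s - 1) • f (y ^ 2 / v)) * (g v / v) := fun y => by
            rw [smul_eq_mul]; ring
        simp only [Function.uncurry_apply_pair, this]
        exact Integrable.mul_const h _
      · have key : ∀ v ∈ Set.Ioi (0 : ℝ),
          (‖(v : ℂ) ^ (s / 2 - 1) • g v‖) * (1 / 2 * mellin (fun t => (‖f t‖ : ℂ)) ((s.re : ℂ) / 2)).re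
          = (∫ y in Set.Ioi (0 : ℝ), ‖(y : ℂ) ^ (s - 1) * (f (y ^ 2 / v) * g v / (v : ℂ))‖) := by
          intro v hv
          have hv0 : 0 < v := hv
          have h := aux_mellin (fun t => (‖f t‖ : ℂ)) s.re hv
          have e1 : ∫ y in Set.Ioi (0 : ℝ), ‖(y : ℂ) ^ (s - 1) * (f (y ^ 2 / v) * g v / (v : ℂ))‖
            = (∫ y in Set.Ioi (0 : ℝ), y ^ (s.re - 1) * ‖f (y ^ 2 / v)‖) * (‖g v‖ / v) := by
            rw [← integral_mul_const]
            refine setIntegral_congr_fun measurableSet_Ioi fun y hy => ?_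
            simp only [norm_mul, norm_div, Complex.norm_cpow_eq_rpow_re_of_pos hy,
              Complex.norm_real, Real.norm_of_nonneg hv0.le, Complex.sub_re, Complex.one_re]
            ring
          have e2 : mellin (fun y => (‖f (y ^ 2 / v)‖ : ℂ)) s.re
              = ((∫ y in Set.Ioi (0 : ℝ), y ^ (s.re - 1) * ‖f (y ^ 2 / v)‖ : ℝ) : ℂ) := by
            rw [mellin, ← integral_complex_ofReal]
            refine setIntegral_congr_fun measurableSet_Ioi fun y hy => ?_
            have hy0 : 0 < y := hy
            simp only [smul_eq_mul, Complex.ofReal_mul, Complex.ofReal_cpow hy0.le,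
              Complex.ofReal_sub, Complex.ofReal_one]
          rw [e2] at h
          have h3 : (v : ℂ) ^ ((s.re : ℂ) / 2) = ((v ^ (s.re / 2) : ℝ) : ℂ) := by
            rw [Complex.ofReal_cpow hv0.le]; simp
          rw [h3] at h
          have h4 := congrArg Complex.re h
          rw [Complex.re_ofReal_mul, Complex.ofReal_re] at h4
          rw [e1, h4, norm_smul, Complex.norm_cpow_eq_rpow_re_of_pos hv0, Complex.sub_re,
            Complex.one_re, Real.rpow_sub hv0, Real.rpow_one]
          have : (s / 2).re = s.re / 2 := by simp
          rw [this]
          ring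
        have := (Integrable.norm hg).mul_const
          (1 / 2 * mellin (fun t => (‖f t‖ : ℂ)) ((s.re : ℂ) / 2)).re
        exact IntegrableOn.congr_fun this key measurableSet_Ioi
    · rw [Measure.prod_restrict]
      refine ContinuousOn.aestronglyMeasurable ?_ (measurableSet_Ioi.prod measurableSet_Ioi)
      have c1 : ContinuousOn (fun p : ℝ × ℝ => (p.1 : ℂ) ^ (s - 1))
          (Set.Ioi 0 ×ˢ Set.Ioi 0) := by
        intro p hp
        have : (p.1 : ℂ) ∈ Complex.slitPlane := Complex.ofReal_mem_slitPlane.mpr hp.1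
        exact (ContinuousAt.cpow (f := fun p : ℝ × ℝ => (p.1 : ℂ)) (g := fun _ => s - 1)
          (by fun_prop) (by fun_prop) this).continuousWithinAt
      have c2 : ContinuousOn (fun p : ℝ × ℝ => f (p.1 ^ 2 / p.2)) (Set.Ioi 0 ×ˢ Set.Ioi 0) := by
        refine hfc.comp (ContinuousOn.div (by fun_prop) (by fun_prop) ?_) ?_
        · intro p hp
          exact ne_of_gt hp.2
        · intro p hp
          have h1 : 0 < p.1 := hp.1
          have h2 : 0 < p.2 := hp.2
          exact div_pos (pow_pos h1 2) h2
      have c3 : ContinuousOn (fun p : ℝ × ℝ => g p.2) (Set.Ioi 0 ×ˢ Set.Ioi 0) :=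
        hgc.comp (by fun_prop) fun p hp => hp.2
      have c4 : ContinuousOn (fun p : ℝ × ℝ => (p.2 : ℂ)) (Set.Ioi 0 ×ˢ Set.Ioi 0) := by
        fun_prop
      exact c1.mul ((c2.mul c3).div c4 fun p hp => Complex.ofReal_ne_zero.mpr (ne_of_gt hp.2))
  calc _ = ∫ y in Set.Ioi (0 : ℝ), ∫ v in Set.Ioi (0 : ℝ),
        (y : ℂ) ^ (s - 1) * (f (y ^ 2 / v) * g v / (v : ℂ)) := by
        refine setIntegral_congr_fun measurableSet_Ioi fun y hy => ?_
        simp only [aux_inner f g hy, integral_const_mul]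
    _ = ∫ v in Set.Ioi (0 : ℝ), ∫ y in Set.Ioi (0 : ℝ),
        (y : ℂ) ^ (s - 1) * (f (y ^ 2 / v) * g v / (v : ℂ)) := integral_integral_swap hint
    _ = ∫ v in Set.Ioi (0 : ℝ), (1 / 2 * mellin f (s / 2)) * ((v : ℂ) ^ (s / 2 - 1) • g v) :=
        setIntegral_congr_fun measurableSet_Ioi step
    _ = _ := by rw [integral_const_mul]; rfl

lemma aux_expsum {c y : ℝ} (hc : 0 < c) (hy : 0 < y) :
    Summable fun n : ℕ => Real.exp (-(c * ((n : ℝ) + 1) ^ 2) * y) := by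
  have h : Summable fun n : ℕ => Real.exp ((n : ℝ) * (-(c * y))) :=
    Real.summable_exp_nat_mul_iff.mpr (by nlinarith [mul_pos hc hy])
  refine Summable.of_nonneg_of_le (fun n => (Real.exp_pos _).le) (fun n => ?_) h
  apply Real.exp_le_exp.mpr
  have : (n : ℝ) ≤ ((n : ℝ) + 1) ^ 2 := by
    have : (0 : ℝ) ≤ n := Nat.cast_nonneg n
    nlinarith
  nlinarith [mul_pos hc hy]

lemma aux_hasSum (a : ℕ → ℂ) (ha : ∀ n, ‖a n‖ ≤ 1) {c y : ℝ} (hc : 0 < c) (hy : 0 < y) :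
    Summable fun n : ℕ => a n * (Real.exp (-(c * ((n : ℝ) + 1) ^ 2) * y) : ℂ) := by
  refine Summable.of_norm_bounded (aux_expsum hc hy) fun n => ?_
  rw [norm_mul, Complex.norm_real, Real.norm_of_nonneg (Real.exp_pos _).le]
  exact mul_le_of_le_one_left (Real.exp_pos _).le (ha n)

lemma aux_psum {c : ℝ} (hc : 0 < c) {r : ℝ} (hr : 1 / 2 < r) :
    Summable fun n : ℕ => 1 / (c * ((n : ℝ) + 1) ^ 2) ^ r := by
  have h : Summable fun n : ℕ => 1 / (((n + 1 : ℕ) : ℝ)) ^ (2 * r) :=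
    (summable_nat_add_iff (f := fun n : ℕ => 1 / (n : ℝ) ^ (2 * r)) 1).mpr
      (Real.summable_one_div_nat_rpow.mpr (by linarith))
  refine (h.mul_left (1 / c ^ r)).congr fun n => ?_
  have hn : (0 : ℝ) ≤ (n : ℝ) + 1 := by positivity
  rw [Real.mul_rpow hc.le (by positivity), ← Real.rpow_natCast_mul hn]
  push_cast
  rw [one_div_mul_one_div]

lemma aux_mellinHasSum (a : ℕ → ℂ) (ha : ∀ n, ‖a n‖ ≤ 1) {c : ℝ} (hc : 0 < c) {s : ℂ}
    (hs : 1 / 2 < s.re) :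
    HasSum (fun n : ℕ => Complex.Gamma s * a n / ((c * ((n : ℝ) + 1) ^ 2 : ℝ) : ℂ) ^ s)
      (mellin (fun y => ∑' n : ℕ, a n * (Real.exp (-(c * ((n : ℝ) + 1) ^ 2) * y) : ℂ)) s) := by
  refine hasSum_mellin (fun n => Or.inr (by positivity)) (by linarith)
    (fun t ht => (aux_hasSum a ha hc ht).hasSum) ?_
  refine Summable.of_nonneg_of_le (fun n => by positivity) (fun n => ?_) (aux_psum hc hs)
  have := ha n
  gcongr

lemma aux_cont (a : ℕ → ℂ) (ha : ∀ n, ‖a n‖ ≤ 1) {c : ℝ} (hc : 0 < c) :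
    ContinuousOn (fun y : ℝ => ∑' n : ℕ, a n * (Real.exp (-(c * ((n : ℝ) + 1) ^ 2) * y) : ℂ))
      (Set.Ioi 0) := by
  intro y hy
  have hy0 : 0 < y := hy
  have h : ContinuousOn
      (fun y : ℝ => ∑' n : ℕ, a n * (Real.exp (-(c * ((n : ℝ) + 1) ^ 2) * y) : ℂ))
      (Set.Ici (y / 2)) := by
    refine continuousOn_tsum (fun n => by fun_prop) (aux_expsum hc (half_pos hy0)) ?_
    intro n x hx
    rw [norm_mul, Complex.norm_real, Real.norm_of_nonneg (Real.exp_pos _).le]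
    refine (mul_le_of_le_one_left (Real.exp_pos _).le (ha n)).trans ?_
    apply Real.exp_le_exp.mpr
    have hx' : y / 2 ≤ x := hx
    have : 0 < c * ((n : ℝ) + 1) ^ 2 := by positivity
    nlinarith
  exact (h.continuousAt (Ici_mem_nhds (by linarith))).continuousWithinAt

lemma aux_theta {c : ℝ} (hc : 0 < c) {r : ℝ} (hr : 1 / 2 < r) :
    MellinConvergent
      (fun y : ℝ => ∑' n : ℕ, (1 : ℂ) * (Real.exp (-(c * ((n : ℝ) + 1) ^ 2) * y) : ℂ)) r := by
  have h := aux_mellinHasSum (fun _ => 1) (by simp) hc (s := (r : ℂ)) (by simpa using hr)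
  have hr0 : 0 < r := by linarith
  by_contra hcon
  have h0 : mellin (fun y : ℝ => ∑' n : ℕ,
      (1 : ℂ) * (Real.exp (-(c * ((n : ℝ) + 1) ^ 2) * y) : ℂ)) r = 0 := integral_undef hcon
  rw [h0] at h
  have h' := Complex.hasSum_re h
  have e : ∀ n : ℕ, (Complex.Gamma r * 1 / ((c * ((n : ℝ) + 1) ^ 2 : ℝ) : ℂ) ^ (r : ℂ)).re
      = Real.Gamma r / (c * ((n : ℝ) + 1) ^ 2) ^ r := by
    intro n
    rw [← Complex.ofReal_cpow (by positivity), Complex.Gamma_ofReal, mul_one,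
      ← Complex.ofReal_div, Complex.ofReal_re]
  simp only [e, Complex.zero_re] at h'
  have hpos : ∀ n : ℕ, 0 < Real.Gamma r / (c * ((n : ℝ) + 1) ^ 2) ^ r := fun n => by
    have := Real.Gamma_pos_of_pos hr0
    positivity
  have := (hasSum_zero_iff_of_nonneg fun n => (hpos n).le).mp h'
  exact (hpos 0).ne' (congrFun this 0)

lemma aux_mconv (a : ℕ → ℂ) (ha : ∀ n, ‖a n‖ ≤ 1) {c : ℝ} (hc : 0 < c) {s : ℂ}
    (hs : 1 / 2 < s.re) :
    MellinConvergent
      (fun y : ℝ => ∑' n : ℕ, a n * (Real.exp (-(c * ((n : ℝ) + 1) ^ 2) * y) : ℂ)) s := by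
  refine Integrable.mono (aux_theta hc hs) ?_ ?_
  · refine ContinuousOn.aestronglyMeasurable ?_ measurableSet_Ioi
    have c1 : ContinuousOn (fun y : ℝ => (y : ℂ) ^ (s - 1)) (Set.Ioi 0) := by
      intro y hy
      have : (y : ℂ) ∈ Complex.slitPlane := Complex.ofReal_mem_slitPlane.mpr hy
      exact (ContinuousAt.cpow (f := fun y : ℝ => (y : ℂ)) (g := fun _ => s - 1)
        (by fun_prop) (by fun_prop) this).continuousWithinAt
    exact c1.smul (aux_cont a ha hc)
  · filter_upwards [ae_restrict_mem measurableSet_Ioi] with y hy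
    rw [norm_smul, norm_smul, Complex.norm_cpow_eq_rpow_re_of_pos hy,
      Complex.norm_cpow_eq_rpow_re_of_pos hy]
    have hy0 : 0 < y := hy
    simp only [Complex.sub_re, Complex.ofReal_re, one_mul]
    refine mul_le_mul_of_nonneg_left ?_ (by positivity)
    rw [← Complex.ofReal_tsum, Complex.norm_real,
      Real.norm_of_nonneg (tsum_nonneg fun n => (Real.exp_pos _).le)]
    refine tsum_of_norm_bounded (aux_expsum hc hy0).hasSum fun n => ?_
    rw [norm_mul, Complex.norm_real, Real.norm_of_nonneg (Real.exp_pos _).le]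
    exact mul_le_of_le_one_left (Real.exp_pos _).le (ha n)

lemma aux_mellin_eq (a : ℕ → ℂ) (ha : ∀ n, ‖a n‖ ≤ 1) {c : ℝ} (hc : 0 < c) {s : ℂ}
    (hs : 1 < s.re) :
    mellin (fun y => ∑' n : ℕ, a n * (Real.exp (-(c * ((n : ℝ) + 1) ^ 2) * y) : ℂ)) (s / 2)
      = Complex.Gamma (s / 2) * (c : ℂ) ^ (-(s / 2)) *
        ∑' n : ℕ, a n * ((n + 1 : ℕ) : ℂ) ^ (-s) := by
  have hs2 : 1 / 2 < (s / 2).re := by simp; linarith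
  rw [← (aux_mellinHasSum a ha hc hs2).tsum_eq, ← tsum_mul_left]
  refine tsum_congr fun n => ?_
  have hn : (0 : ℝ) ≤ (n : ℝ) + 1 := by positivity
  have e : (((((n : ℝ) + 1) ^ 2 : ℝ)) : ℂ) ^ (s / 2) = ((n + 1 : ℕ) : ℂ) ^ s := by
    have : ((((n : ℝ) + 1) ^ 2 : ℝ)) = (((n + 1 : ℕ) : ℝ)) ^ 2 := by push_cast; rfl
    rw [this, Complex.ofReal_pow, ← Complex.cpow_nat_mul']
    · congr 1
      push_cast
      ring
    all_goals
      rw [Complex.arg_ofReal_of_nonneg (by positivity)]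
      simp [Real.pi_pos, Real.pi_pos.le]
  rw [Complex.ofReal_mul, Complex.mul_cpow_ofReal_nonneg hc.le (by positivity), e,
    Complex.cpow_neg, Complex.cpow_neg]
  field_simp

/-- The product `L(s,ν)L(s,conj ν)` is the Mellin transform of the multiplicative
convolution `H` of the two ϑ-series: for `Re(s) > 1`,
`∫_0^∞ y^(s-1) H(y) dy = (1/2) Γ(s/2)² (π/N)^(-s) L(s,ν) L(s,conj ν)`. -/
theorem stmt13 (N : ℕ) (hN : 1 ≤ N) (ν : DirichletCharacter ℂ N)
    (g gbar H : ℝ → ℂ)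
    (hg : ∀ y : ℝ, g y = ∑' n : ℕ, ν ((n + 1 : ℕ) : ZMod N) *
      ((Real.exp (-Real.pi * (n + 1) ^ 2 * y / N) : ℝ) : ℂ))
    (hgbar : ∀ y : ℝ, gbar y = ∑' n : ℕ, (starRingEnd ℂ) (ν ((n + 1 : ℕ) : ZMod N)) *
      ((Real.exp (-Real.pi * (n + 1) ^ 2 * y / N) : ℝ) : ℂ))
    (hH : ∀ y : ℝ, H y = ∫ y' in Set.Ioi (0 : ℝ), g (y * y') * gbar (y / y') / (y' : ℂ))
    (s : ℂ) (hs : 1 < s.re) :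
    ∫ y in Set.Ioi (0 : ℝ), (y : ℂ) ^ (s - 1) * H y
      = (1 / 2) * Complex.Gamma (s / 2) ^ 2 * ((Real.pi / N : ℝ) : ℂ) ^ (-s) *
        ((∑' n : ℕ, ν ((n + 1 : ℕ) : ZMod N) * ((n + 1 : ℕ) : ℂ) ^ (-s)) *
          (∑' n : ℕ, (starRingEnd ℂ) (ν ((n + 1 : ℕ) : ZMod N)) * ((n + 1 : ℕ) : ℂ) ^ (-s))) := by
  have hN0 : (0 : ℝ) < N := by exact_mod_cast hN
  have hc : 0 < Real.pi / N := div_pos Real.pi_pos hN0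
  have hs2 : 1 / 2 < (s / 2).re := by simp; linarith
  have ha : ∀ n : ℕ, ‖ν ((n + 1 : ℕ) : ZMod N)‖ ≤ 1 := fun n => ν.norm_le_one _
  have hb : ∀ n : ℕ, ‖(starRingEnd ℂ) (ν ((n + 1 : ℕ) : ZMod N))‖ ≤ 1 := fun n => by
    rw [RCLike.norm_conj]
    exact ha n
  have e : ∀ (n : ℕ) (y : ℝ), -Real.pi * ((n : ℝ) + 1) ^ 2 * y / N
      = -(Real.pi / N * ((n : ℝ) + 1) ^ 2) * y := fun n y => by ring
  have hg' : g = fun y => ∑' n : ℕ, ν ((n + 1 : ℕ) : ZMod N) *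
      (Real.exp (-(Real.pi / N * ((n : ℝ) + 1) ^ 2) * y) : ℂ) := by
    funext y
    simp only [hg, e]
  have hb' : gbar = fun y => ∑' n : ℕ, (starRingEnd ℂ) (ν ((n + 1 : ℕ) : ZMod N)) *
      (Real.exp (-(Real.pi / N * ((n : ℝ) + 1) ^ 2) * y) : ℂ) := by
    funext y
    simp only [hgbar, e]
  have hmain := aux_main g gbar s (hg' ▸ aux_cont _ ha hc) (hb' ▸ aux_cont _ hb hc)
    (hg' ▸ aux_mconv _ ha hc hs2) (hb' ▸ aux_mconv _ hb hc hs2)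
  have m1 := aux_mellin_eq _ ha hc hs
  have m2 := aux_mellin_eq _ hb hc hs
  rw [← hg'] at m1
  rw [← hb'] at m2
  simp only [hH]
  rw [hmain, m1, m2]
  have hp : ((Real.pi / N : ℝ) : ℂ) ^ (-s)
      = ((Real.pi / N : ℝ) : ℂ) ^ (-(s / 2)) * ((Real.pi / N : ℝ) : ℂ) ^ (-(s / 2)) := by
    rw [← Complex.cpow_add _ _ (Complex.ofReal_ne_zero.mpr hc.ne')]
    congr 1
    ring
  rw [hp]
  ring
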